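/- Syntactic Tarski's Theorem for a consistent theory T implies the Weak Diagonal Lemma for T: if for every formula Φ(x) the theory T does not contain all biconditionals Φ(⌜β⌝) ↔ β, then for every formula Ψ(x) there exists a sentence θ such that T + (Ψ(⌜θ⌝) ↔ θ) is consistent. -/

import Mathlib

open FirstOrder Language

/-- Function symbols of the language of arithmetic: 0, 1, +, ×. -/
inductive ArithFunc : ℕ → Type
  | zero : ArithFunc 0
  | one : ArithFunc 0
  | add : ArithFunc 2
  | mul : ArithFunc 2

/-- Relation symbols of the language of arithmetic: <. -/
inductive ArithRel : ℕ → Type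
  | lt : ArithRel 2

/-- The first-order language of arithmetic. -/
def LA : FirstOrder.Language := ⟨ArithFunc, ArithRel⟩

/-- The standard model ℕ of arithmetic. -/
instance : LA.Structure ℕ where
  funMap := fun {_} f => match f with
    | .zero => fun _ => 0
    | .one => fun _ => 1
    | .add => fun v => v 0 + v 1
    | .mul => fun v => v 0 * v 1
  RelMap := fun {_} r => match r with
    | .lt => fun v => v 0 < v 1

instance : Encodable (Σ n, LA.Functions n) :=
  Encodable.ofEquiv (Fin 4)
    { toFun := fun f => match f with
        | ⟨0, .zero⟩ => 0
        | ⟨0, .one⟩ => 1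
        | ⟨2, .add⟩ => 2
        | ⟨2, .mul⟩ => 3
      invFun := fun i => match i with
        | 0 => ⟨0, .zero⟩
        | 1 => ⟨0, .one⟩
        | 2 => ⟨2, .add⟩
        | 3 => ⟨2, .mul⟩
      left_inv := by rintro ⟨n, f⟩ <;> cases f <;> rfl
      right_inv := by intro i; fin_cases i <;> rfl }

instance : Encodable (Σ n, LA.Relations n) :=
  Encodable.ofEquiv (Fin 1)
    { toFun := fun f => match f with
        | ⟨2, .lt⟩ => 0
      invFun := fun _ => ⟨2, .lt⟩
      left_inv := by rintro ⟨n, r⟩; cases r; rfl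
      right_inv := by intro i; fin_cases i; rfl }

/-- A canonical (computable, injective) Gödel numbering `⌜·⌝` of sentences,
via Mathlib's list encoding of first-order formulas. -/
def godelCode (φ : LA.Sentence) : ℕ :=
  Encodable.encode φ.listEncode

/-- The numeral `n̄`: `0̄ = 0`, `1̄ = 1`, `(m+1)̄ = 1 + m̄`. -/
def numeral (α : Type) : ℕ → LA.Term α
  | 0 => Constants.term ArithFunc.zero
  | 1 => Constants.term ArithFunc.one
  | n + 2 => Functions.apply₂ (L := LA) ArithFunc.add
      (Constants.term ArithFunc.one) (numeral α (n + 1))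

/-- `ℕ ⊨ Ψ(⌜θ⌝)`: the formula `Ψ(x)` holds in the standard model ℕ at the
Gödel code of the sentence `θ`. -/
def RealizeAtCode (Ψ : LA.Formula (Fin 1)) (θ : LA.Sentence) : Prop :=
  Ψ.Realize (M := ℕ) (fun _ => (godelCode θ : ℕ))

/-- A theory is consistent iff it does not prove (have as a consequence) falsum. -/
def Consistent (T : LA.Theory) : Prop :=
  ¬ (T ⊨ᵇ (⊥ : LA.Sentence))

/-- The sentence `Ψ(⌜θ⌝) ↔ θ`. -/
def diagBicond (Ψ : LA.Formula (Fin 1)) (θ : LA.Sentence) : LA.Sentence :=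
  (Ψ.subst (fun _ => numeral Empty (godelCode θ))) ⇔ θ

/-- The term `t + 1` (successor). -/
def succT {α : Type} {n : ℕ} (t : LA.Term (α ⊕ Fin n)) : LA.Term (α ⊕ Fin n) :=
  Functions.apply₂ (L := LA) ArithFunc.add t (Constants.term ArithFunc.one)

/-- The term `0`. -/
def zeroT {α : Type} {n : ℕ} : LA.Term (α ⊕ Fin n) := Constants.term (L := LA) ArithFunc.zero

/-- The term `t + s`. -/
def addT {α : Type} {n : ℕ} (t s : LA.Term (α ⊕ Fin n)) : LA.Term (α ⊕ Fin n) :=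
  Functions.apply₂ (L := LA) ArithFunc.add t s

/-- The term `t * s`. -/
def mulT {α : Type} {n : ℕ} (t s : LA.Term (α ⊕ Fin n)) : LA.Term (α ⊕ Fin n) :=
  Functions.apply₂ (L := LA) ArithFunc.mul t s

/-- The atomic formula `t < s`. -/
def ltF {α : Type} {n : ℕ} (t s : LA.Term (α ⊕ Fin n)) : LA.BoundedFormula α n :=
  Relations.boundedFormula₂ (L := LA) ArithRel.lt t s

/-- Robinson's arithmetic Q. -/
def Q : LA.Theory :=
  { ∀' ∼(succT &0 =' zeroT),
    ∀' ∀' (succT &0 =' succT &1 ⟹ &0 =' &1),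
    ∀' (∼(&0 =' zeroT) ⟹ ∃' (&0 =' succT &1)),
    ∀' (addT &0 zeroT =' &0),
    ∀' ∀' (addT &0 (succT &1) =' succT (addT &0 &1)),
    ∀' (mulT &0 zeroT =' zeroT),
    ∀' ∀' (mulT &0 (succT &1) =' addT (mulT &0 &1) &0),
    ∀' ∀' (ltF &0 &1 ⇔ ∃' (addT &0 (succT &2) =' &1)) }

/-- A theory is recursively enumerable iff its set of Gödel codes is the domain
of a partial recursive function. -/
def RETheory (T : LA.Theory) : Prop :=
  ∃ f : ℕ →. Unit, Partrec f ∧ ∀ φ : LA.Sentence, φ ∈ T ↔ (f (godelCode φ)).Dom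

section Models

universe u v w

variable {L : FirstOrder.Language.{u, v}} {T : L.Theory}

theorem union_singleton_models_bot_iff {φ : L.Sentence} :
    T ∪ {φ} ⊨ᵇ (⊥ : L.Sentence) ↔ T ⊨ᵇ φ.not := by
  simp only [Theory.models_sentence_iff]
  constructor
  · intro hbot M
    refine (Sentence.realize_not M).2 fun hφ => ?_
    have hM : M ⊨ T ∪ {φ} := M.is_model.union (Theory.model_singleton_iff.2 hφ)
    exact Sentence.not_realize_bot M (hbot (Theory.ModelType.of _ M))
  · intro hnot M
    have hφ : M ⊨ φ :=
      Theory.realize_sentence_of_mem _ (Set.mem_union_right T (Set.mem_singleton φ))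
    exact ((Sentence.realize_not M).1 (hnot (M.subtheoryModel Set.subset_union_left)) hφ).elim

theorem models_not_iff_iff {α : Type w} {n : ℕ} {φ ψ : L.BoundedFormula α n} :
    T ⊨ᵇ (φ.iff ψ).not ↔ T ⊨ᵇ φ.not.iff ψ := by
  simp only [Theory.ModelsBoundedFormula, BoundedFormula.realize_iff, BoundedFormula.realize_not,
    not_iff]

end Models

section Diagonal

variable {T : LA.Theory}

theorem consistent_union_singleton_iff {φ : LA.Sentence} :
    Consistent (T ∪ {φ}) ↔ ¬ T ⊨ᵇ φ.not :=
  not_congr union_singleton_models_bot_iff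

-- Substitution commutes with negation definitionally, so this is `models_not_iff_iff` at `Ψ(⌜θ⌝)`.
theorem models_not_diagBicond_iff {Ψ : LA.Formula (Fin 1)} {θ : LA.Sentence} :
    T ⊨ᵇ (diagBicond Ψ θ).not ↔ T ⊨ᵇ diagBicond Ψ.not θ :=
  models_not_iff_iff

theorem consistent_union_diagBicond_iff {Ψ : LA.Formula (Fin 1)} {θ : LA.Sentence} :
    Consistent (T ∪ {diagBicond Ψ θ}) ↔ ¬ T ⊨ᵇ diagBicond Ψ.not θ :=
  consistent_union_singleton_iff.trans (not_congr models_not_diagBicond_iff)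

end Diagonal

/-- Syntactic Tarski's Theorem for a consistent `T` implies the Weak Diagonal
Lemma for `T`. -/
theorem stmt9 (T : LA.Theory) (hcons : Consistent T)
    (tarski : ∀ Φ : LA.Formula (Fin 1), ¬ ∀ β : LA.Sentence, T ⊨ᵇ diagBicond Φ β) :
    ∀ Ψ : LA.Formula (Fin 1), ∃ θ : LA.Sentence, Consistent (T ∪ {diagBicond Ψ θ}) := by
  intro Ψ
  obtain ⟨θ, hθ⟩ := not_forall.1 (tarski Ψ.not)
  exact ⟨θ, consistent_union_diagBicond_iff.2 hθ⟩
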